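/- Let f : B^n → ℝ be C^{d+1}, ω a degree-≤ s polynomial curve with ω([-1,1]) ⊂ B^n. Suppose ω([-1,1]) contains at least d+1 distinct zeros of f, and that m := max_{t ∈ [-1,1]} |f(ω(t))| > 0. Then Σ_{|α|=η}^{d+1} max_{x ∈ B^n} ‖f^{(α)}(x)‖ ≥ m·(d+1)!·C(n,d,s)/2^{d+1}, with η = ⌊(d+1)/(s+1)⌋ + 1 and C(n,d,s) = [s^{2(d+1)}(n+1)^{d+1}(d+1)^{(d+1)(n+2)}]^{-1}. -/

import Mathlib

open Metric

/-!
Vanishing of `g = f ∘ ω` at `N` points of `[-1, 1]` forces, by divided differences, its `N`-th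
derivative to be at least `N! |g u| / 2 ^ N` somewhere. By Faà di Bruno's formula this derivative
is a sum, over partitions of `{1, …, N}`, of derivatives of `f` of order the number `k` of blocks,
evaluated on derivatives of `ω` of orders the block sizes. A block larger than the degree `s`
contributes zero, so only orders with `N ≤ k * s` survive, and a Markov inequality bounds the
derivatives of `ω`.
-/

section DividedDifference

open Polynomial

lemma exists_iteratedDerivWithin_eq_zero_of_strictMono {a b : ℝ} (hab : a < b) {N : ℕ}
    {h : ℝ → ℝ} (hh : ContDiffOn ℝ N h (Set.Icc a b)) {z : Fin (N + 1) → ℝ} (hz : StrictMono z)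
    (hmem : ∀ i, z i ∈ Set.Icc a b) (hzero : ∀ i, h (z i) = 0) :
    ∃ ξ ∈ Set.Icc a b, iteratedDerivWithin N h (Set.Icc a b) ξ = 0 := by
  induction N generalizing h with
  | zero => exact ⟨z 0, hmem 0, by simpa using hzero 0⟩
  | succ N ih =>
    have rolle (i : Fin (N + 1)) : ∃ c ∈ Set.Ioo (z i.castSucc) (z i.succ),
        derivWithin h (Set.Icc a b) c = 0 := by
      obtain ⟨c, hc, hc0⟩ := exists_deriv_eq_zero (hz Fin.castSucc_lt_succ)
        (hh.continuousOn.mono (Set.Icc_subset_Icc (hmem _).1 (hmem _).2)) (by rw [hzero, hzero])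
      have hnhds : Set.Icc a b ∈ nhds c :=
        Icc_mem_nhds ((hmem _).1.trans_lt hc.1) (hc.2.trans_le (hmem _).2)
      exact ⟨c, hc, by rw [derivWithin_of_mem_nhds hnhds, hc0]⟩
    choose c hc hc0 using rolle
    have hc_mono : StrictMono c := fun i j hij =>
      calc c i < z i.succ := (hc i).2
        _ ≤ z j.castSucc := hz.monotone (Fin.succ_le_castSucc_iff.mpr hij)
        _ < c j := (hc j).1
    obtain ⟨ξ, hξ, hξ0⟩ := ih (hh.derivWithin (uniqueDiffOn_Icc hab) (by norm_cast)) hc_mono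
      (fun i => ⟨(hmem _).1.trans (hc i).1.le, (hc i).2.le.trans (hmem _).2⟩) hc0
    exact ⟨ξ, hξ, by rw [iteratedDerivWithin_succ', hξ0]⟩

lemma exists_iteratedDerivWithin_eq_zero_of_card_eq {a b : ℝ} (hab : a < b) {N : ℕ}
    {h : ℝ → ℝ} (hh : ContDiffOn ℝ N h (Set.Icc a b)) {Z : Finset ℝ} (hcard : Z.card = N + 1)
    (hZ : (Z : Set ℝ) ⊆ Set.Icc a b) (hzero : ∀ z ∈ Z, h z = 0) :
    ∃ ξ ∈ Set.Icc a b, iteratedDerivWithin N h (Set.Icc a b) ξ = 0 :=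
  exists_iteratedDerivWithin_eq_zero_of_strictMono hab hh (Z.orderEmbOfFin hcard).strictMono
    (fun i => hZ (Z.orderEmbOfFin_mem hcard i)) fun i => hzero _ (Z.orderEmbOfFin_mem hcard i)

lemma iteratedDerivWithin_polynomial_eval (Q : ℝ[X]) (p : ℕ) {I : Set ℝ}
    (hI : UniqueDiffOn ℝ I) {t : ℝ} (ht : t ∈ I) :
    iteratedDerivWithin p (fun x => Q.eval x) I t = (derivative^[p] Q).eval t := by
  induction p generalizing Q with
  | zero => simp
  | succ p ih =>
    rw [iteratedDerivWithin_succ', Function.iterate_succ_apply, ← ih]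
    exact iteratedDerivWithin_congr
      (fun x hx => (Q.hasDerivAt x).hasDerivWithinAt.derivWithin (hI x hx)) ht

lemma contDiff_polynomial_eval (Q : ℝ[X]) (n : WithTop ℕ∞) :
    ContDiff ℝ n fun x => Q.eval x := by
  simpa only [coe_aeval_eq_eval] using contDiff_aeval (𝕜 := ℝ) Q n

lemma exists_factorial_mul_eq_iteratedDerivWithin_mul_prod {a b : ℝ} (hab : a < b) {g : ℝ → ℝ}
    {T : Finset ℝ} (hg : ContDiffOn ℝ T.card g (Set.Icc a b)) (hT : (T : Set ℝ) ⊆ Set.Icc a b)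
    (hzero : ∀ t ∈ T, g t = 0) {u : ℝ} (hu : u ∈ Set.Icc a b) :
    ∃ ξ ∈ Set.Icc a b, T.card.factorial * g u =
      iteratedDerivWithin T.card g (Set.Icc a b) ξ * ∏ t ∈ T, (u - t) := by
  by_cases huT : u ∈ T
  · exact ⟨u, hu, by rw [hzero u huT, Finset.prod_eq_zero huT (sub_self u), mul_zero, mul_zero]⟩
  set W : ℝ[X] := ∏ t ∈ T, (X - C t)
  have hW (x : ℝ) : W.eval x = ∏ t ∈ T, (x - t) := by
    simp only [W, eval_prod, eval_sub, eval_X, eval_C]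
  have hWderiv : derivative^[T.card] W = C (T.card.factorial : ℝ) := by
    simp [W, iterate_derivative_prod_X_sub_C le_rfl]
  have hWdiff := contDiff_polynomial_eval W T.card
  obtain ⟨ξ, hξ, hξ0⟩ := exists_iteratedDerivWithin_eq_zero_of_card_eq hab
    (h := fun x => W.eval u * g x - g u * W.eval x)
    ((contDiffOn_const.mul hg).sub (contDiff_const.mul hWdiff).contDiffOn)
    (Finset.card_insert_of_notMem huT)
    (by simpa [Set.insert_subset_iff] using ⟨hu, hT⟩)
    (by
      intro z hz
      rcases Finset.mem_insert.mp hz with rfl | hzT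
      · ring
      · simp only [hzero z hzT, hW z, Finset.prod_eq_zero hzT (sub_self z), mul_zero, sub_zero])
  refine ⟨ξ, hξ, ?_⟩
  have hI := uniqueDiffOn_Icc hab
  have hderiv : iteratedDerivWithin T.card (fun x => W.eval u * g x - g u * W.eval x)
      (Set.Icc a b) ξ =
      W.eval u * iteratedDerivWithin T.card g (Set.Icc a b) ξ - g u * T.card.factorial := by
    rw [← Pi.sub_def, iteratedDerivWithin_sub hξ hI ((contDiffOn_const.mul hg) ξ hξ)
      ((contDiff_const.mul hWdiff).contDiffOn ξ hξ), iteratedDerivWithin_const_mul_field,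
      iteratedDerivWithin_const_mul_field, iteratedDerivWithin_polynomial_eval W _ hI hξ,
      hWderiv, eval_C]
  rw [← hW]
  linarith

lemma exists_factorial_mul_abs_le_iteratedDerivWithin {a b : ℝ} (hab : a < b) {g : ℝ → ℝ}
    {T : Finset ℝ} (hg : ContDiffOn ℝ T.card g (Set.Icc a b)) (hT : (T : Set ℝ) ⊆ Set.Icc a b)
    (hzero : ∀ t ∈ T, g t = 0) {u : ℝ} (hu : u ∈ Set.Icc a b) :
    ∃ ξ ∈ Set.Icc a b, T.card.factorial * |g u| ≤
      |iteratedDerivWithin T.card g (Set.Icc a b) ξ| * (b - a) ^ T.card := by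
  obtain ⟨ξ, hξ, hξu⟩ :=
    exists_factorial_mul_eq_iteratedDerivWithin_mul_prod hab hg hT hzero hu
  refine ⟨ξ, hξ, ?_⟩
  have hprod : |∏ t ∈ T, (u - t)| ≤ (b - a) ^ T.card := by
    rw [Finset.abs_prod]
    exact (Finset.prod_le_prod (fun _ _ => abs_nonneg _) fun t ht =>
      Real.dist_le_of_mem_Icc hu (hT ht)).trans_eq (Finset.prod_const _)
  calc (T.card.factorial : ℝ) * |g u|
      = |iteratedDerivWithin T.card g (Set.Icc a b) ξ| * |∏ t ∈ T, (u - t)| := by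
        rw [← abs_mul, ← hξu, abs_mul, Nat.abs_cast]
    _ ≤ _ := by gcongr

end DividedDifference

section Markov

open Polynomial

lemma iterate_derivative_chebyshevT_eval_one_le (s k : ℕ) :
    (derivative^[k] (Chebyshev.T ℝ s)).eval 1 ≤ ((s : ℝ) ^ 2) ^ k := by
  induction k with
  | zero => simp
  | succ k ih =>
    have hnonneg (j : ℕ) : 0 ≤ (derivative^[j] (Chebyshev.T ℝ s)).eval 1 :=
      (abs_nonneg _).trans (Chebyshev.abs_iterate_derivative_T_real_le s j abs_one.le)
    have hrec := Chebyshev.iterate_derivative_T_eval_one_recurrence (R := ℝ) s k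
    rw [Int.cast_natCast] at hrec
    calc (derivative^[k + 1] (Chebyshev.T ℝ s)).eval 1
        ≤ (2 * k + 1) * (derivative^[k + 1] (Chebyshev.T ℝ s)).eval 1 :=
          le_mul_of_one_le_left (hnonneg _) (le_add_of_nonneg_left (by positivity))
      _ = ((s : ℝ) ^ 2 - k ^ 2) * (derivative^[k] (Chebyshev.T ℝ s)).eval 1 := hrec
      _ ≤ (s : ℝ) ^ 2 * (derivative^[k] (Chebyshev.T ℝ s)).eval 1 :=
          mul_le_mul_of_nonneg_right (sub_le_self _ (by positivity)) (hnonneg k)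
      _ ≤ (s : ℝ) ^ 2 * ((s : ℝ) ^ 2) ^ k := mul_le_mul_of_nonneg_left ih (by positivity)
      _ = ((s : ℝ) ^ 2) ^ (k + 1) := (pow_succ' _ _).symm

lemma iterate_derivative_comp_affine {R : Type*} [CommSemiring R] (Q : R[X]) (a b : R) (k : ℕ) :
    derivative^[k] (Q.comp (C a * X + C b)) =
      C (a ^ k) * (derivative^[k] Q).comp (C a * X + C b) := by
  induction k with
  | zero => simp
  | succ k ih =>
    simp only [Function.iterate_succ_apply', ih, derivative_C_mul, derivative_comp, derivative_add,
      derivative_C, derivative_X, mul_one, add_zero, pow_succ, C_mul, mul_assoc]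

lemma abs_eval_iterate_derivative_one_le {s : ℕ} {Q : ℝ[X]} (hdeg : Q.natDegree ≤ s)
    (hQ : ∀ x ∈ Set.Icc (-1 : ℝ) 1, |Q.eval x| ≤ 1) (k : ℕ) :
    |(derivative^[k] Q).eval 1| ≤ ((s : ℝ) ^ 2) ^ k := by
  have upper {R : ℝ[X]} (hR : R.natDegree ≤ s) (hR1 : ∀ x ∈ Set.Icc (-1 : ℝ) 1, |R.eval x| ≤ 1) :
      (derivative^[k] R).eval 1 ≤ ((s : ℝ) ^ 2) ^ k :=
    (Chebyshev.eval_iterate_derivative_le_of_forall_abs_le_one le_rfl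
      (degree_le_of_natDegree_le hR) hR1).trans (iterate_derivative_chebyshevT_eval_one_le s k)
  refine abs_le'.mpr ⟨upper hdeg hQ, ?_⟩
  simpa only [iterate_derivative_neg, eval_neg] using
    upper (R := -Q) (by rwa [natDegree_neg]) (by simpa only [eval_neg, abs_neg] using hQ)

lemma abs_pow_mul_abs_eval_iterate_derivative_le {s : ℕ} {Q : ℝ[X]} (hdeg : Q.natDegree ≤ s)
    (hQ : ∀ x ∈ Set.Icc (-1 : ℝ) 1, |Q.eval x| ≤ 1) {a b : ℝ} (hab : |a| + |b| ≤ 1) (k : ℕ) :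
    |a| ^ k * |(derivative^[k] Q).eval (a + b)| ≤ ((s : ℝ) ^ 2) ^ k := by
  have hdeg' : (Q.comp (C a * X + C b)).natDegree ≤ s :=
    calc (Q.comp (C a * X + C b)).natDegree ≤ Q.natDegree * 1 :=
          natDegree_comp_le.trans (Nat.mul_le_mul_left _ natDegree_linear_le)
      _ ≤ s := by rwa [mul_one]
  have hbound (x : ℝ) (hx : x ∈ Set.Icc (-1 : ℝ) 1) :
      |(Q.comp (C a * X + C b)).eval x| ≤ 1 := by
    have hax : |a * x + b| ≤ 1 :=
      calc |a * x + b| ≤ |a| * |x| + |b| := by rw [← abs_mul]; exact abs_add_le _ _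
        _ ≤ |a| * 1 + |b| := by gcongr; exact abs_le.mpr hx
        _ ≤ 1 := by rwa [mul_one]
    simpa using hQ _ (abs_le.mp hax)
  simpa [iterate_derivative_comp_affine, abs_mul] using
    abs_eval_iterate_derivative_one_le hdeg' hbound k

lemma abs_eval_iterate_derivative_le {s : ℕ} {Q : ℝ[X]} (hdeg : Q.natDegree ≤ s)
    (hQ : ∀ x ∈ Set.Icc (-1 : ℝ) 1, |Q.eval x| ≤ 1) (k : ℕ) {x : ℝ}
    (hx : x ∈ Set.Icc (-1 : ℝ) 1) :
    |(derivative^[k] Q).eval x| ≤ (2 * (s : ℝ) ^ 2) ^ k := by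
  -- Map `[-1, 1]` affinely onto the longer of the intervals between `x` and `±1`, sending `1`
  -- to `x`: there the Chebyshev polynomial is extremal.
  obtain ⟨a, b, hab, hax, ha⟩ : ∃ a b : ℝ, |a| + |b| ≤ 1 ∧ a + b = x ∧ 1 ≤ 2 * |a| := by
    obtain ⟨hx1, hx2⟩ := hx
    rcases le_total 0 x with h | h
    · refine ⟨(x + 1) / 2, (x - 1) / 2, ?_, by ring, ?_⟩ <;> grind
    · refine ⟨(x - 1) / 2, (x + 1) / 2, ?_, by ring, ?_⟩ <;> grind
  calc |(derivative^[k] Q).eval x|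
      ≤ (2 * |a|) ^ k * |(derivative^[k] Q).eval x| :=
        le_mul_of_one_le_left (abs_nonneg _) (one_le_pow₀ ha)
    _ = 2 ^ k * (|a| ^ k * |(derivative^[k] Q).eval (a + b)|) := by rw [mul_pow, mul_assoc, hax]
    _ ≤ 2 ^ k * ((s : ℝ) ^ 2) ^ k := by
        gcongr
        exact abs_pow_mul_abs_eval_iterate_derivative_le hdeg hQ hab k
    _ = (2 * (s : ℝ) ^ 2) ^ k := (mul_pow _ _ _).symm

end Markov

section OrderedFinpartition

lemma card_orderedFinpartition_le_factorial (N : ℕ) :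
    Fintype.card (OrderedFinpartition N) ≤ N.factorial := by
  induction N with
  | zero => simp
  | succ N ih =>
    calc Fintype.card (OrderedFinpartition (N + 1))
        = ∑ c : OrderedFinpartition N, (c.length + 1) := by
          simp [← Fintype.card_congr (OrderedFinpartition.extendEquiv N), Fintype.card_sigma]
      _ ≤ ∑ _c : OrderedFinpartition N, (N + 1) := by gcongr with c; exact c.length_le
      _ = (N + 1) * Fintype.card (OrderedFinpartition N) := by simp [mul_comm]
      _ ≤ (N + 1).factorial := Nat.mul_le_mul_left _ ih

variable {N : ℕ} (c : OrderedFinpartition N)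

lemma sum_partSize_eq : ∑ j, c.partSize j = N := by
  simpa using c.sum_sigma_eq_sum fun _ => (1 : ℕ)

lemma exists_lt_partSize {s : ℕ} (h : c.length * s < N) : ∃ j, s < c.partSize j := by
  have hsum : ∑ _j : Fin c.length, s < ∑ j, c.partSize j := by simpa [sum_partSize_eq] using h
  simpa using Finset.exists_lt_of_sum_lt hsum

end OrderedFinpartition

lemma factorial_mul_two_mul_pow_le {n : ℕ} (hn : n ≠ 0) (N s : ℕ) :
    N.factorial * (2 * s) ^ (2 * N) ≤ 2 ^ N * (s ^ (2 * N) * (n + 1) ^ N * N ^ (N * (n + 2))) :=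
  calc N.factorial * (2 * s) ^ (2 * N)
      ≤ (N ^ N) ^ (n + 2) * (2 * s) ^ (2 * N) := by
        gcongr
        exact N.factorial_le_pow.trans (Nat.le_self_pow (by lia) _)
    _ = 2 ^ N * (s ^ (2 * N) * 2 ^ N * N ^ (N * (n + 2))) := by
        rw [← pow_mul, mul_pow, two_mul N, pow_add 2]
        ring
    _ ≤ 2 ^ N * (s ^ (2 * N) * (n + 1) ^ N * N ^ (N * (n + 2))) := by
        gcongr
        lia

lemma mul_factorial_mul_inv_div_two_pow_le {n N s : ℕ} (hn : n ≠ 0) {x S : ℝ} (hS : 0 ≤ S)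
    (hx : x ≤ (2 * s) ^ (2 * N) * S) :
    x * N.factorial * ((s : ℝ) ^ (2 * N) * (n + 1) ^ N * N ^ (N * (n + 2)))⁻¹ / 2 ^ N ≤ S := by
  have hconst : (N.factorial * (2 * s) ^ (2 * N) : ℝ) ≤
      2 ^ N * (s ^ (2 * N) * (n + 1) ^ N * N ^ (N * (n + 2))) := by
    exact_mod_cast factorial_mul_two_mul_pow_le hn N s
  rw [div_le_iff₀ (by positivity)]
  refine mul_inv_le_of_le_mul₀ (by positivity) (by positivity) ?_
  calc x * N.factorial
      ≤ (2 * s) ^ (2 * N) * S * N.factorial := mul_le_mul_of_nonneg_right hx (Nat.cast_nonneg _)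
    _ = N.factorial * (2 * s) ^ (2 * N) * S := by ring
    _ ≤ 2 ^ N * (s ^ (2 * N) * (n + 1) ^ N * N ^ (N * (n + 2))) * S :=
        mul_le_mul_of_nonneg_right hconst hS
    _ = S * 2 ^ N * (s ^ (2 * N) * (n + 1) ^ N * N ^ (N * (n + 2))) := by ring

lemma filter_le_mul_subset_Icc {N : ℕ} (hN : 0 < N) (s : ℕ) :
    {k ∈ Finset.range (N + 1) | N ≤ k * s} ⊆ Finset.Icc (N / (s + 1) + 1) N := by
  intro k hk
  obtain ⟨hkN, hks⟩ := Finset.mem_filter.mp hk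
  have hk0 : 0 < k := Nat.pos_of_mul_pos_right (hN.trans_le hks)
  have hdiv : N / (s + 1) < k := (Nat.div_lt_iff_lt_mul s.succ_pos).mpr (by lia)
  exact Finset.mem_Icc.mpr ⟨hdiv, Finset.mem_range_succ_iff.mp hkN⟩

section PolynomialCurve

open Polynomial

variable {ι E F : Type*} [Fintype ι] [NormedAddCommGroup E] [NormedSpace ℝ E]
  [NormedAddCommGroup F] [NormedSpace ℝ F]

/-- The `ℓ¹` norm of the coefficients of a multilinear map in the family `e`. For the `k`-th
derivative of a function and the standard basis, this is the sum of the norms of all partial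
derivatives of order `k`, each counted once for every ordering of its variables. -/
def coeffNorm {k : ℕ} (e : ι → E) (M : E [×k]→L[ℝ] F) : ℝ :=
  ∑ c : Fin k → ι, ‖M fun j => e (c j)‖

lemma coeffNorm_nonneg {k : ℕ} (e : ι → E) (M : E [×k]→L[ℝ] F) : 0 ≤ coeffNorm e M :=
  Finset.sum_nonneg fun _ _ => norm_nonneg _

lemma norm_map_sum_smul_le {k : ℕ} (e : ι → E) (M : E [×k]→L[ℝ] F) {a : Fin k → ι → ℝ}
    {B : Fin k → ℝ} (hB : ∀ j i, |a j i| ≤ B j) :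
    ‖M fun j => ∑ i, a j i • e i‖ ≤ (∏ j, B j) * coeffNorm e M := by
  classical
  calc ‖M fun j => ∑ i, a j i • e i‖
      = ‖∑ c : Fin k → ι, (∏ j, a j (c j)) • M fun j => e (c j)‖ := by
        simp only [M.map_sum, M.map_smul_univ]
    _ ≤ ∑ c : Fin k → ι, ‖(∏ j, a j (c j)) • M fun j => e (c j)‖ := norm_sum_le _ _
    _ ≤ ∑ c : Fin k → ι, (∏ j, B j) * ‖M fun j => e (c j)‖ := by
        gcongr with c
        rw [norm_smul, Real.norm_eq_abs, Finset.abs_prod]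
        gcongr with j
        exact hB j (c j)
    _ = (∏ j, B j) * coeffNorm e M := (Finset.mul_sum _ _ _).symm

/-- The curve whose coordinates in the family `e` are the polynomials `P i`. -/
def polynomialCurve (P : ι → ℝ[X]) (e : ι → E) (t : ℝ) : E :=
  ∑ i, (P i).eval t • e i

variable {P : ι → ℝ[X]} {e : ι → E} {s N : ℕ} {t : ℝ}

lemma contDiff_polynomialCurve (P : ι → ℝ[X]) (e : ι → E) (n : WithTop ℕ∞) :
    ContDiff ℝ n (polynomialCurve P e) :=
  ContDiff.sum fun i _ => (contDiff_polynomial_eval (P i) n).smul contDiff_const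

lemma iteratedDerivWithin_polynomialCurve (P : ι → ℝ[X]) (e : ι → E) (p : ℕ) {I : Set ℝ}
    (hI : UniqueDiffOn ℝ I) (ht : t ∈ I) :
    iteratedDerivWithin p (polynomialCurve P e) I t =
      ∑ i, (derivative^[p] (P i)).eval t • e i := by
  have hP (i : ι) : ContDiffWithinAt ℝ p (fun x => (P i).eval x) I t :=
    (contDiff_polynomial_eval (P i) p).contDiffWithinAt
  unfold polynomialCurve
  rw [iteratedDerivWithin_fun_sum (f := fun i x => (P i).eval x • e i) ht hI fun i _ =>
    (hP i).smul contDiffWithinAt_const]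
  refine Finset.sum_congr rfl fun i _ => ?_
  rw [iteratedDerivWithin_smul_const ht hI (hP i), iteratedDerivWithin_polynomial_eval _ _ hI ht]

lemma iteratedDerivWithin_polynomialCurve_eq_zero (hdeg : ∀ i, (P i).natDegree ≤ s) {p : ℕ}
    (hp : s < p) {I : Set ℝ} (hI : UniqueDiffOn ℝ I) (ht : t ∈ I) :
    iteratedDerivWithin p (polynomialCurve P e) I t = 0 := by
  rw [iteratedDerivWithin_polynomialCurve P e p hI ht]
  exact Finset.sum_eq_zero fun i _ => by
    rw [iterate_derivative_eq_zero ((hdeg i).trans_lt hp), eval_zero, zero_smul]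

lemma norm_map_iteratedDerivWithin_polynomialCurve_le (hdeg : ∀ i, (P i).natDegree ≤ s)
    (hP : ∀ i, ∀ x ∈ Set.Icc (-1 : ℝ) 1, |(P i).eval x| ≤ 1) (ht : t ∈ Set.Icc (-1 : ℝ) 1)
    (c : OrderedFinpartition N) (M : E [×c.length]→L[ℝ] F) :
    ‖M fun j => iteratedDerivWithin (c.partSize j) (polynomialCurve P e) (Set.Icc (-1) 1) t‖ ≤
      (2 * (s : ℝ) ^ 2) ^ N * coeffNorm e M := by
  have hI : UniqueDiffOn ℝ (Set.Icc (-1 : ℝ) 1) := uniqueDiffOn_Icc (by norm_num)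
  simp only [iteratedDerivWithin_polynomialCurve P e _ hI ht]
  calc ‖M fun j => ∑ i, (derivative^[c.partSize j] (P i)).eval t • e i‖
      ≤ (∏ j, (2 * (s : ℝ) ^ 2) ^ c.partSize j) * coeffNorm e M :=
        norm_map_sum_smul_le e M fun j i => abs_eval_iterate_derivative_le (hdeg i) (hP i) _ ht
    _ = (2 * (s : ℝ) ^ 2) ^ N * coeffNorm e M := by
        rw [Finset.prod_pow_eq_pow_sum, sum_partSize_eq]

lemma norm_iteratedDerivWithin_comp_polynomialCurve_le {K : Set E} (hK : UniqueDiffOn ℝ K)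
    {f : E → F} (hf : ContDiffOn ℝ N f K) (hdeg : ∀ i, (P i).natDegree ≤ s)
    (hP : ∀ i, ∀ x ∈ Set.Icc (-1 : ℝ) 1, |(P i).eval x| ≤ 1)
    (hmaps : Set.MapsTo (polynomialCurve P e) (Set.Icc (-1) 1) K) (ht : t ∈ Set.Icc (-1 : ℝ) 1) :
    ‖iteratedDerivWithin N (f ∘ polynomialCurve P e) (Set.Icc (-1) 1) t‖ ≤
      N.factorial * ((2 * (s : ℝ) ^ 2) ^ N * ∑ k ∈ Finset.range (N + 1) with N ≤ k * s,
        coeffNorm e (iteratedFDerivWithin ℝ k f K (polynomialCurve P e t))) := by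
  set ω := polynomialCurve P e
  set A : ℕ → ℝ := fun k => coeffNorm e (iteratedFDerivWithin ℝ k f K (ω t))
  have hI : UniqueDiffOn ℝ (Set.Icc (-1 : ℝ) 1) := uniqueDiffOn_Icc (by norm_num)
  have hA (k : ℕ) : 0 ≤ A k := coeffNorm_nonneg _ _
  have hsum : 0 ≤ ∑ k ∈ Finset.range (N + 1) with N ≤ k * s, A k :=
    Finset.sum_nonneg fun k _ => hA k
  have hterm (c : OrderedFinpartition N) :
      ‖iteratedFDerivWithin ℝ c.length f K (ω t) fun j =>
        iteratedDerivWithin (c.partSize j) ω (Set.Icc (-1) 1) t‖ ≤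
      (2 * (s : ℝ) ^ 2) ^ N * ∑ k ∈ Finset.range (N + 1) with N ≤ k * s, A k := by
    rcases lt_or_ge (c.length * s) N with hlt | hle
    · obtain ⟨j, hj⟩ := exists_lt_partSize c hlt
      rw [ContinuousMultilinearMap.map_coord_zero _ j
        (iteratedDerivWithin_polynomialCurve_eq_zero hdeg hj hI ht), norm_zero]
      positivity
    · have hmem : c.length ∈ Finset.range (N + 1) ∧ N ≤ c.length * s :=
        ⟨Finset.mem_range_succ_iff.mpr c.length_le, hle⟩
      refine (norm_map_iteratedDerivWithin_polynomialCurve_le hdeg hP ht c _).trans ?_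
      gcongr
      exact Finset.single_le_sum (f := A) (fun k _ => hA k) (Finset.mem_filter.mpr hmem)
  rw [iteratedDerivWithin_vcomp_eq_sum_orderedFinpartition (hf _ (hmaps ht))
    (contDiff_polynomialCurve P e N).contDiffWithinAt hK hI ht hmaps le_rfl]
  calc _ ≤ _ := norm_sum_le_of_le _ fun c _ => hterm c
    _ = Fintype.card (OrderedFinpartition N) * _ := by
        rw [Finset.sum_const, Finset.card_univ, nsmul_eq_mul]
    _ ≤ N.factorial * _ := by gcongr; exact card_orderedFinpartition_le_factorial N

lemma exists_abs_le_sum_coeffNorm_of_zeros {K : Set E} (hK : UniqueDiffOn ℝ K) {f : E → ℝ}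
    {T : Finset ℝ} (hf : ContDiffOn ℝ T.card f K) (hdeg : ∀ i, (P i).natDegree ≤ s)
    (hP : ∀ i, ∀ x ∈ Set.Icc (-1 : ℝ) 1, |(P i).eval x| ≤ 1)
    (hmaps : Set.MapsTo (polynomialCurve P e) (Set.Icc (-1) 1) K)
    (hT : (T : Set ℝ) ⊆ Set.Icc (-1) 1) (hzero : ∀ t ∈ T, f (polynomialCurve P e t) = 0)
    {u : ℝ} (hu : u ∈ Set.Icc (-1 : ℝ) 1) :
    ∃ ξ ∈ Set.Icc (-1 : ℝ) 1, |f (polynomialCurve P e u)| ≤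
      (2 * s : ℝ) ^ (2 * T.card) * ∑ k ∈ Finset.range (T.card + 1) with T.card ≤ k * s,
        coeffNorm e (iteratedFDerivWithin ℝ k f K (polynomialCurve P e ξ)) := by
  obtain ⟨ξ, hξ, hlower⟩ := exists_factorial_mul_abs_le_iteratedDerivWithin (by norm_num)
    (hf.comp (contDiff_polynomialCurve P e T.card).contDiffOn hmaps) hT hzero hu
  have hconst : (2 * s : ℝ) ^ (2 * T.card) = (2 * (s : ℝ) ^ 2) ^ T.card * 2 ^ T.card := by
    rw [pow_mul, ← mul_pow]
    ring
  refine ⟨ξ, hξ, le_of_mul_le_mul_left ?_ (Nat.cast_pos.mpr T.card.factorial_pos)⟩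
  calc _ ≤ _ := hlower
    _ ≤ _ := mul_le_mul_of_nonneg_right
        (norm_iteratedDerivWithin_comp_polynomialCurve_le hK hf hdeg hP hmaps hξ)
        (by norm_num)
    _ = _ := by
        rw [hconst, show (1 - -1 : ℝ) = 2 by norm_num]
        ring

theorem rigidity_on_polynomial_curves_general {d : ℕ} {K : Set E} (hK : UniqueDiffOn ℝ K)
    {f : E → ℝ} (hf : ContDiffOn ℝ (d + 1) f K) (hdeg : ∀ i, (P i).natDegree ≤ s)
    (hP : ∀ i, ∀ x ∈ Set.Icc (-1 : ℝ) 1, |(P i).eval x| ≤ 1)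
    (hmaps : Set.MapsTo (polynomialCurve P e) (Set.Icc (-1) 1) K)
    {T : Finset ℝ} (hT : (T : Set ℝ) ⊆ Set.Icc (-1) 1) (hTcard : d + 1 ≤ T.card)
    (hzero : ∀ t ∈ T, f (polynomialCurve P e t) = 0) {u : ℝ} (hu : u ∈ Set.Icc (-1 : ℝ) 1) :
    ∃ ξ ∈ Set.Icc (-1 : ℝ) 1,
      |f (polynomialCurve P e u)| * (d + 1).factorial *
          ((s : ℝ) ^ (2 * (d + 1)) * (Fintype.card ι + 1) ^ (d + 1) *
            (d + 1) ^ ((d + 1) * (Fintype.card ι + 2)))⁻¹ / 2 ^ (d + 1) ≤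
        ∑ k ∈ Finset.Icc ((d + 1) / (s + 1) + 1) (d + 1),
          coeffNorm e (iteratedFDerivWithin ℝ k f K (polynomialCurve P e ξ)) := by
  obtain ⟨S, hST, hScard⟩ := Finset.exists_subset_card_eq hTcard
  obtain ⟨ξ, hξ, hbound⟩ := exists_abs_le_sum_coeffNorm_of_zeros (T := S) hK
    (by rw [hScard]; exact_mod_cast hf) hdeg hP hmaps ((Finset.coe_subset.mpr hST).trans hT)
    (fun t ht => hzero t (hST ht)) hu
  rw [hScard] at hbound
  refine ⟨ξ, hξ, ?_⟩
  set A : ℕ → ℝ := fun k =>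
    coeffNorm e (iteratedFDerivWithin ℝ k f K (polynomialCurve P e ξ))
  have hA (k : ℕ) : 0 ≤ A k := coeffNorm_nonneg _ _
  have hA_sum : 0 ≤ ∑ k ∈ Finset.Icc ((d + 1) / (s + 1) + 1) (d + 1), A k :=
    Finset.sum_nonneg fun k _ => hA k
  rcases isEmpty_or_nonempty ι with hι | hι
  · obtain ⟨t, ht⟩ : T.Nonempty := Finset.card_pos.mp (d.succ_pos.trans_le hTcard)
    have hu0 : f (polynomialCurve P e u) = 0 := by simpa [polynomialCurve] using hzero t ht
    simpa [hu0] using hA_sum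
  have hsub : ∑ k ∈ Finset.range (d + 1 + 1) with d + 1 ≤ k * s, A k ≤
      ∑ k ∈ Finset.Icc ((d + 1) / (s + 1) + 1) (d + 1), A k :=
    Finset.sum_le_sum_of_subset_of_nonneg (filter_le_mul_subset_Icc d.succ_pos s) fun k _ _ => hA k
  exact_mod_cast mul_factorial_mul_inv_div_two_pow_le Fintype.card_ne_zero hA_sum
    (hbound.trans (mul_le_mul_of_nonneg_left hsub (by positivity)))

end PolynomialCurve

lemma eq_polynomialCurve_single {n : ℕ} {P : Fin n → Polynomial ℝ}
    {ω : ℝ → EuclideanSpace ℝ (Fin n)} (hω : ∀ t i, ω t i = (P i).eval t) :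
    ω = polynomialCurve P fun i => EuclideanSpace.single i 1 := by
  ext t i
  simp [hω, polynomialCurve, Pi.single_apply]

/-- Smooth rigidity on polynomial curves: if a degree-≤ `s` polynomial curve
`ω : [-1,1] → Bⁿ` passes through at least `d+1` distinct zeros of a `C^{d+1}` function
`f : Bⁿ → ℝ` and `m = max_{[-1,1]} |f(ω(t))| > 0`, then the sum over orders
`η = ⌊(d+1)/(s+1)⌋ + 1` to `d+1` of the sup over `Bⁿ` of the norms of the partial
derivatives of `f` is at least `m (d+1)! C(n,d,s) / 2^{d+1}`, with
`C(n,d,s) = [s^{2(d+1)} (n+1)^{d+1} (d+1)^{(d+1)(n+2)}]⁻¹`. (The sups are encoded by an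
arbitrary family of upper bounds `A k`.) -/
theorem rigidity_on_polynomial_curves
    (n d s : ℕ) (f : EuclideanSpace ℝ (Fin n) → ℝ)
    (hf : ContDiffOn ℝ (d + 1) f (closedBall (0 : EuclideanSpace ℝ (Fin n)) 1))
    (P : Fin n → Polynomial ℝ) (hdeg : ∀ i, (P i).natDegree ≤ s)
    (ω : ℝ → EuclideanSpace ℝ (Fin n)) (hωdef : ∀ t i, ω t i = (P i).eval t)
    (hball : ∀ t ∈ Set.Icc (-1 : ℝ) 1,
      ω t ∈ closedBall (0 : EuclideanSpace ℝ (Fin n)) 1)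
    (T : Finset ℝ) (hT : (T : Set ℝ) ⊆ Set.Icc (-1 : ℝ) 1)
    (hTcard : d + 1 ≤ T.card) (hTzero : ∀ t ∈ T, f (ω t) = 0)
    (m : ℝ) (hm0 : 0 < m)
    (hmbound : ∀ t ∈ Set.Icc (-1 : ℝ) 1, |f (ω t)| ≤ m)
    (hmattain : ∃ t ∈ Set.Icc (-1 : ℝ) 1, |f (ω t)| = m) :
    ∀ A : ℕ → ℝ,
      (∀ k, ∀ x ∈ closedBall (0 : EuclideanSpace ℝ (Fin n)) 1,
        (∑ c : Fin k → Fin n,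
          |iteratedFDerivWithin ℝ k f (closedBall (0 : EuclideanSpace ℝ (Fin n)) 1) x
            (fun i => EuclideanSpace.single (c i) 1)|) ≤ A k) →
      m * (Nat.factorial (d + 1) : ℝ) *
          ((s : ℝ) ^ (2 * (d + 1)) * (n + 1) ^ (d + 1) *
            (d + 1) ^ ((d + 1) * (n + 2)))⁻¹ / 2 ^ (d + 1) ≤
        ∑ k ∈ Finset.Icc ((d + 1) / (s + 1) + 1) (d + 1), A k := by
  intro A hA
  have hK : UniqueDiffOn ℝ (closedBall (0 : EuclideanSpace ℝ (Fin n)) 1) :=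
    uniqueDiffOn_convex (convex_closedBall _ _)
      ⟨0, ball_subset_interior_closedBall (mem_ball_self one_pos)⟩
  have hP (i : Fin n) (t : ℝ) (ht : t ∈ Set.Icc (-1 : ℝ) 1) : |(P i).eval t| ≤ 1 := by
    rw [← hωdef]
    exact (PiLp.norm_apply_le (ω t) i).trans (mem_closedBall_zero_iff.mp (hball t ht))
  obtain rfl := eq_polynomialCurve_single hωdef
  obtain ⟨u, hu, rfl⟩ := hmattain
  obtain ⟨ξ, hξ, hbound⟩ :=
    rigidity_on_polynomial_curves_general hK hf hdeg hP hball hT hTcard hTzero hu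
  rw [Fintype.card_fin] at hbound
  exact hbound.trans (Finset.sum_le_sum fun k _ => hA k _ (hball ξ hξ))
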